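/- Let T be a ℂ-linear triangulated category of finite type with split-generator G, and let F₁, F₂ be triangulated endofunctors of T such that (F₁F₂)ⁿG ≇ 0 and (F₂F₁)ⁿG ≇ 0 for all n ≥ 0. Then h_t(F₁F₂) = h_t(F₂F₁) for all t ∈ ℝ. -/

import Mathlib

/-!
Up to an index shift, `(F₁F₂)ⁿ⁺¹G = F₁(F₂F₁)ⁿ(F₂G)`. Complexity is submultiplicative,
`δ(A, N) ≤ δ(A, B) δ(B, N)`, and does not increase under a triangulated functor, so
`δ(G, (F₁F₂)ⁿ⁺¹G) ≤ δ(G, F₁G) δ(G, F₂G) δ(G, (F₂F₁)ⁿG)`. The constant is finite because `G` is a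
split-generator, hence it disappears in the growth rate (`limsup_log_le`), and exchanging `F₁` and
`F₂` gives the reverse inequality (`entropy_comp_le`).

Both submultiplicativity and finiteness need filtrations to be concatenated (`Built.append`), that
is, extensions to be associative (`IsExt.assoc`). This is usually the octahedral axiom, which is
not part of the definition of a pretriangulated category, and it is replaced here by an argument
specific to finite type. Given triangles `X → E → W` and `Y → W → Z`, let `E₁` be the fibre of
`E → W → Z` and `E₂` the fibre of `Y → W → X⟦1⟧`. Counting dimensions in long exact sequences
shows that `Hom(T, E₁)` and `Hom(T, E₂)` have the same dimension for all `T` (`hom_octahedron`), and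
objects of a category of finite type are determined up to isomorphism by these dimensions
(`nonempty_iso_of_hom_eq`).

For the latter, let `Hom(T, A)` and `Hom(T, B)` have the same dimension for all `T`. As
`Hom(U⟦n⟧, A)` vanishes for large `n`, long exact sequences and descending induction on `n` show
that `Hom(f, A)` and `Hom(f, B)` have the same rank for every morphism `f` (`contrarank_eq`). Hence
the `End A`-module `Hom(B, A)` has the same `Hom`-dimensions into the modules `End A ⧸ I` as `End A`
itself (`finrank_hom_quotient`), so it is cyclic (`exists_cyclic`). A generator `f : B ⟶ A` has the
property that every morphism `B ⟶ A` factors through it; equality of ranks transfers this to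
morphisms `B ⟶ B`, so `f` is a split monomorphism, and comparing dimensions makes it an
isomorphism.
-/


open CategoryTheory Limits Pretriangulated Filter
open scoped ENNReal

universe u v u₂ v₂

namespace CatEntropy

section Defs

variable (C : Type u) [Category.{v} C] [Preadditive C] [HasZeroObject C]
  [HasShift C ℤ] [∀ n : ℤ, (shiftFunctor C n).Additive] [Pretriangulated C]

/-- `C` is of finite type: for all objects `M, N`, the total dimension
`Σ_{n ∈ ℤ} dim_ℂ Hom(M, N⟦n⟧)` is finite. -/
def IsFiniteType [Linear ℂ C] : Prop :=
  ∀ M N : C, {n : ℤ | ¬ Subsingleton (M ⟶ N⟦n⟧)}.Finite ∧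
    ∀ n : ℤ, FiniteDimensional ℂ (M ⟶ N⟦n⟧)

/-- A set of objects is a thick triangulated subcategory: closed under isomorphisms,
shifts, cones and direct summands. -/
structure IsThick (S : Set C) : Prop where
  mem_of_iso : ∀ {X Y : C}, (X ≅ Y) → X ∈ S → Y ∈ S
  shift_mem : ∀ (X : C) (n : ℤ), X ∈ S → X⟦n⟧ ∈ S
  cone_mem : ∀ (T : Triangle C), T ∈ (distTriang C) → T.obj₁ ∈ S → T.obj₂ ∈ S → T.obj₃ ∈ S
  summand_mem : ∀ (X Y : C), (X ⊞ Y) ∈ S → X ∈ S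

/-- `⟨M⟩`, the smallest thick triangulated subcategory containing `M`. -/
def thickClosure (M : C) : Set C :=
  ⋂₀ {S : Set C | IsThick C S ∧ M ∈ S}

/-- `G` is a split-generator of `C` if `⟨G⟩ = C`. -/
def IsSplitGenerator (G : C) : Prop := ∀ X : C, X ∈ thickClosure C G

open Classical in
/-- The complexity `δ_{C,t}(M, N)` of `N` with respect to `M`. -/
noncomputable def complexity (t : ℝ) (M N : C) : ℝ≥0∞ :=
  if IsZero N then 0
  else if N ∈ thickClosure C M then
    sInf {c : ℝ≥0∞ |
      ∃ (p : ℕ) (_ : 0 < p) (n : Fin p → ℤ) (A : Fin (p + 1) → C) (N' : C),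
        IsZero (A 0) ∧ Nonempty (A (Fin.last p) ≅ N ⊞ N') ∧
        (∀ i : Fin p,
          ∃ (f : A i.castSucc ⟶ A i.succ) (g : A i.succ ⟶ M⟦n i⟧)
            (h : M⟦n i⟧ ⟶ (A i.castSucc)⟦(1 : ℤ)⟧),
              Triangle.mk f g h ∈ (distTriang C)) ∧
        c = ∑ i : Fin p, ENNReal.ofReal (Real.exp ((n i : ℝ) * t))}
  else ⊤

/-- Iterated composition `Fⁿ` of an endofunctor. -/
def iter (F : C ⥤ C) : ℕ → C ⥤ C
  | 0 => 𝟭 C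
  | n + 1 => iter F n ⋙ F

/-- The entropy `h_t(F)` of an endofunctor `F`, computed with the split-generator `G`
(the defining limit exists and agrees with the `limsup` used here). -/
noncomputable def entropy (F : C ⥤ C) (G : C) (t : ℝ) : EReal :=
  Filter.atTop.limsup fun m : ℕ =>
    (((m : ℝ)⁻¹ : ℝ) : EReal) * (complexity C t G ((iter C F m).obj G)).log

end Defs

set_option linter.unusedSectionVars false

/-! ### Cyclic modules over finite-dimensional algebras -/

section Algebra
variable {k : Type*} [Field k] {R : Type*} [Ring R] [Algebra k R]

theorem finite_hom (P M : Type*) [AddCommGroup P] [Module R P] [Module k P] [IsScalarTower k R P]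
    [Module.Finite k P] [AddCommGroup M] [Module R M] [Module k M] [IsScalarTower k R M]
    [Module.Finite k M] : Module.Finite k (P →ₗ[R] M) :=
  Module.Finite.of_injective (LinearMap.restrictScalarsₗ k R P M k)
    (LinearMap.restrictScalars_injective k)

theorem finite_submodule {P : Type*} [AddCommGroup P] [Module R P] [Module k P]
    [IsScalarTower k R P] [Module.Finite k P] (S : Submodule R P) : Module.Finite k S :=
  Module.Finite.of_injective (S.subtype.restrictScalars k) S.subtype_injective

/-- Finite-dimensional semisimple modules are compared by the dimensions of their `Hom`-spaces into
the simple modules `R ⧸ I`, which record the multiplicities; equal dimensions give a surjection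
(by splitting off one simple summand at a time). -/
theorem exists_surjective_of_semisimple [Module.Finite k R] (n : ℕ) :
    ∀ (P N : Type _) [AddCommGroup P] [Module R P] [Module k P] [IsScalarTower k R P]
      [Module.Finite k P] [IsSemisimpleModule R P]
      [AddCommGroup N] [Module R N] [Module k N] [IsScalarTower k R N]
      [Module.Finite k N] [IsSemisimpleModule R N],
      Module.finrank k N = n →
      (∀ I : Ideal R, I.IsMaximal →
        Module.finrank k (P →ₗ[R] R ⧸ I) = Module.finrank k (N →ₗ[R] R ⧸ I)) →
      ∃ f : P →ₗ[R] N, Function.Surjective f := by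
  induction n using Nat.strong_induction_on with
  | _ n ih =>
  intro P N _ _ _ _ _ _ _ _ _ _ _ _ hn h
  rcases subsingleton_or_nontrivial N with hN | hN
  · exact ⟨0, fun x => ⟨0, Subsingleton.elim _ _⟩⟩
  obtain ⟨S, hS⟩ := IsSemisimpleModule.exists_simple_submodule R N
  obtain ⟨N₁, hN₁⟩ := exists_isCompl S
  obtain ⟨I, hI, ⟨e⟩⟩ := isSimpleModule_iff_quot_maximal.1 hS
  have := finite_submodule (k := k) S
  have := finite_submodule (k := k) N₁
  let eN : (S × N₁) ≃ₗ[R] N := Submodule.prodEquivOfIsCompl S N₁ hN₁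
  have : Module.Finite k (P →ₗ[R] R ⧸ I) := finite_hom P (R ⧸ I)
  have : Module.Finite k (N →ₗ[R] R ⧸ I) := finite_hom N (R ⧸ I)
  have : IsSimpleModule R (R ⧸ I) := isSimpleModule_iff_isCoatom.2 hI.out
  have hne : ∃ f : P →ₗ[R] R ⧸ I, f ≠ 0 := by
    have h1 : 0 < Module.finrank k (N →ₗ[R] R ⧸ I) := by
      rw [Module.finrank_pos_iff_exists_ne_zero]
      refine ⟨e.toLinearMap ∘ₗ LinearMap.fst R S N₁ ∘ₗ eN.symm.toLinearMap, fun h0 => ?_⟩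
      have := IsSimpleModule.nontrivial R S
      obtain ⟨s, hs⟩ := exists_ne (0 : S)
      have := LinearMap.congr_fun h0 (eN (s, 0))
      simp at this
      exact hs this
    rw [← h I hI, Module.finrank_pos_iff_exists_ne_zero] at h1
    exact h1
  obtain ⟨f, hf⟩ := hne
  have hfs := LinearMap.surjective_of_ne_zero hf
  obtain ⟨P₁, hP₁⟩ := exists_isCompl (LinearMap.ker f)
  have := finite_submodule (k := k) P₁
  have := finite_submodule (k := k) (LinearMap.ker f)
  let eP : (P₁ × LinearMap.ker f) ≃ₗ[R] P := Submodule.prodEquivOfIsCompl _ _ hP₁.symm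
  let e1 : P₁ ≃ₗ[R] S := (Submodule.quotientEquivOfIsCompl _ _ hP₁).symm.trans
    ((f.quotKerEquivOfSurjective hfs).trans e.symm)
  have key : ∀ J : Ideal R, J.IsMaximal → Module.finrank k (LinearMap.ker f →ₗ[R] R ⧸ J) =
      Module.finrank k (N₁ →ₗ[R] R ⧸ J) := by
    intro J hJ
    have h1 := h J hJ
    have : Module.Finite k (P₁ →ₗ[R] R ⧸ J) := finite_hom _ _
    have : Module.Finite k (S →ₗ[R] R ⧸ J) := finite_hom _ _
    have : Module.Finite k (N₁ →ₗ[R] R ⧸ J) := finite_hom _ _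
    have : Module.Finite k (LinearMap.ker f →ₗ[R] R ⧸ J) := finite_hom _ _
    rw [← (eP.congrLeft (R ⧸ J) k).finrank_eq, ← (eN.congrLeft (R ⧸ J) k).finrank_eq,
      ← (LinearMap.coprodEquiv k).finrank_eq, ← (LinearMap.coprodEquiv k).finrank_eq,
      Module.finrank_prod, Module.finrank_prod, (e1.congrLeft (R ⧸ J) k).finrank_eq] at h1
    omega
  have hlt : Module.finrank k N₁ < n := by
    have h2 := (eN.restrictScalars k).finrank_eq
    rw [Module.finrank_prod] at h2
    have := IsSimpleModule.nontrivial R S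
    have : 0 < Module.finrank k S := Module.finrank_pos
    omega
  obtain ⟨g, hg⟩ := ih _ hlt (LinearMap.ker f) N₁ rfl key
  refine ⟨eN.toLinearMap ∘ₗ (LinearMap.prodMap e1.toLinearMap g) ∘ₗ eP.symm.toLinearMap, ?_⟩
  simp only [LinearMap.coe_comp, LinearEquiv.coe_coe]
  refine eN.surjective.comp (Function.Surjective.comp ?_ eP.symm.surjective)
  rw [LinearMap.coe_prodMap]
  exact e1.surjective.prodMap hg

/-- Homomorphisms into a simple module factor through the quotient by the radical. -/
theorem finrank_hom_jacobson (Q S : Type*) [AddCommGroup Q] [Module R Q] [AddCommGroup S]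
    [Module R S] [Module k S] [IsScalarTower k R S] [IsSimpleModule R S] :
    Module.finrank k ((Q ⧸ Module.jacobson R Q) →ₗ[R] S) = Module.finrank k (Q →ₗ[R] S) := by
  let φ : ((Q ⧸ Module.jacobson R Q) →ₗ[R] S) →ₗ[k] (Q →ₗ[R] S) :=
    { toFun := fun f => f ∘ₗ (Module.jacobson R Q).mkQ
      map_add' := fun _ _ => rfl
      map_smul' := fun _ _ => rfl }
  refine (LinearEquiv.ofBijective φ ⟨fun f g h => ?_, fun f => ?_⟩).finrank_eq
  · exact Submodule.linearMap_qext _ h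
  · exact ⟨(Module.jacobson R Q).liftQ f (IsSemisimpleModule.jacobson_le_ker _ _ _ _ f),
      Submodule.liftQ_mkQ _ _ _⟩

/-- A finite-dimensional module with the same `Hom`-dimensions into all `R ⧸ I` as `R` itself is
cyclic: its top is a quotient of the top of `R`, and a generator lifts by Nakayama's lemma. -/
theorem exists_cyclic [Module.Finite k R] (Q : Type*) [AddCommGroup Q] [Module R Q] [Module k Q]
    [IsScalarTower k R Q] [Module.Finite k Q]
    (h : ∀ I : Ideal R, Module.finrank k (Q →ₗ[R] R ⧸ I) = Module.finrank k (R ⧸ I)) :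
    ∃ q : Q, ∀ x : Q, ∃ r : R, r • q = x := by
  have : IsArtinian R R := isArtinian_of_tower k inferInstance
  have : IsArtinian R Q := isArtinian_of_tower k inferInstance
  have : Module.Finite R Q := Module.Finite.of_restrictScalars_finite k R Q
  have : IsSemisimpleModule R (Q ⧸ Module.jacobson R Q) :=
    (IsArtinian.isSemisimpleModule_iff_jacobson R _).2 (Module.jacobson_quotient_jacobson R Q)
  have : IsSemisimpleModule R (R ⧸ Module.jacobson R R) :=
    (IsArtinian.isSemisimpleModule_iff_jacobson R _).2 (Module.jacobson_quotient_jacobson R R)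
  obtain ⟨φ, hφ⟩ := exists_surjective_of_semisimple (k := k) (R := R) _
    (R ⧸ Module.jacobson R R) (Q ⧸ Module.jacobson R Q) rfl (fun I hI => by
      have : IsSimpleModule R (R ⧸ I) := isSimpleModule_iff_isCoatom.2 hI.out
      rw [finrank_hom_jacobson, finrank_hom_jacobson, h I,
        (LinearMap.ringLmapEquivSelf R k (R ⧸ I)).finrank_eq])
  obtain ⟨q, hq⟩ := Submodule.mkQ_surjective _ (φ (Submodule.mkQ _ 1))
  refine ⟨q, ?_⟩
  suffices hs : Submodule.span R {q} = ⊤ by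
    intro x
    exact Submodule.mem_span_singleton.1 (hs ▸ Submodule.mem_top)
  by_contra hne
  obtain ⟨m, hm, hle⟩ := (eq_top_or_exists_le_coatom (Submodule.span R {q})).resolve_left hne
  refine hm.1 (eq_top_iff.2 fun x _ => ?_)
  obtain ⟨y, hy⟩ := hφ (Submodule.mkQ _ x)
  obtain ⟨r, rfl⟩ := Submodule.mkQ_surjective _ y
  have h1 : Submodule.mkQ (Module.jacobson R Q) x = Submodule.mkQ _ (r • q) := by
    rw [map_smul, hq, ← map_smul, ← map_smul, smul_eq_mul, mul_one, hy]
  have h2 : x - r • q ∈ m :=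
    (sInf_le hm : Module.jacobson R Q ≤ m) ((Submodule.Quotient.eq _).1 h1)
  have h3 : r • q ∈ m := m.smul_mem r (hle (Submodule.mem_span_singleton_self q))
  simpa using m.add_mem h2 h3
end Algebra

/-! ### Ranks of linear maps -/

section LinearAlgebra
variable {k : Type*} [Field k] {U V W Z : Type*} [AddCommGroup U] [Module k U] [AddCommGroup V]
  [Module k V] [AddCommGroup W] [Module k W] [AddCommGroup Z] [Module k Z]

open Module LinearMap

theorem finrank_eq_of_exact [Module.Finite k V] {f : U →ₗ[k] V} {g : V →ₗ[k] W}
    (h : range f = ker g) : finrank k V = finrank k (range f) + finrank k (range g) := by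
  rw [h, add_comm, finrank_range_add_finrank_ker]

/-- The rank of a composite, with the defect given by the part of the range that is killed. -/
theorem finrank_range_comp_add [Module.Finite k V] (f : U →ₗ[k] V) (g : V →ₗ[k] W) :
    finrank k (range (g ∘ₗ f)) + finrank k (range f ⊓ ker g : Submodule k V) =
      finrank k (range f) := by
  rw [← finrank_range_add_finrank_ker (g.domRestrict (range f)), range_comp, range_domRestrict,
    ker_domRestrict, ← Submodule.finrank_map_subtype_eq, Submodule.map_comap_subtype]

/-- For two exact pairs through the same space, the two diagonal composites have ranks that differ
exactly as the ranks of the two incoming maps do. -/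
theorem finrank_range_diagonals [Module.Finite k V] {X : Type*} [AddCommGroup X] [Module k X]
    {g : U →ₗ[k] V} {h : V →ₗ[k] W} {a : X →ₗ[k] V} {b : V →ₗ[k] Z}
    (hgh : range g = ker h) (hab : range a = ker b) :
    finrank k (range (b ∘ₗ g)) + finrank k (range a) =
      finrank k (range (h ∘ₗ a)) + finrank k (range g) := by
  have h1 := finrank_range_comp_add g b
  have h2 := finrank_range_comp_add a h
  rw [← hab] at h1
  rw [← hgh, inf_comm] at h2
  omega

end LinearAlgebra

/-! ### Objects are determined by dimensions of `Hom`-spaces -/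

section Hom
variable {C : Type u} [Category.{v} C] [Preadditive C] [HasZeroObject C]
  [HasShift C ℤ] [∀ n : ℤ, (shiftFunctor C n).Additive] [Pretriangulated C] [Linear ℂ C]

/-- `dim_ℂ Hom(X, Y)`. -/
noncomputable def hom (X Y : C) : ℕ := Module.finrank ℂ (X ⟶ Y)

/-- The rank of `Hom(T, f) : Hom(T, X) → Hom(T, Y)`. -/
noncomputable def corank (T : C) {X Y : C} (f : X ⟶ Y) : ℕ :=
  Module.finrank ℂ (LinearMap.range (Linear.rightComp ℂ T f))

/-- The rank of `Hom(f, T) : Hom(Y, T) → Hom(X, T)`. -/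
noncomputable def contrarank (T : C) {X Y : C} (f : X ⟶ Y) : ℕ :=
  Module.finrank ℂ (LinearMap.range (Linear.leftComp ℂ T f))

theorem IsFiniteType.finite (hft : IsFiniteType C) (X Y : C) : Module.Finite ℂ (X ⟶ Y) := by
  have := (hft X Y).2 0
  exact Module.Finite.equiv (Linear.homCongr ℂ (Iso.refl X) ((shiftFunctorZero C ℤ).app Y))

theorem corank_neg (T : C) {X Y : C} (f : X ⟶ Y) : corank T (-f) = corank T f := by
  have : Linear.rightComp ℂ T (-f) = -Linear.rightComp ℂ T f := by ext; simp
  rw [corank, this, LinearMap.range_neg, corank]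

theorem rightComp_exact (T : C) (Δ : Triangle C) (hΔ : Δ ∈ distTriang C) :
    LinearMap.range (Linear.rightComp ℂ T Δ.mor₁) = LinearMap.ker (Linear.rightComp ℂ T Δ.mor₂) := by
  ext x
  constructor
  · rintro ⟨y, rfl⟩
    simp [comp_distTriang_mor_zero₁₂ _ hΔ]
  · intro hx
    obtain ⟨y, hy⟩ := Triangle.coyoneda_exact₂ Δ hΔ x hx
    exact ⟨y, hy.symm⟩

theorem leftComp_exact (T : C) (Δ : Triangle C) (hΔ : Δ ∈ distTriang C) :
    LinearMap.range (Linear.leftComp ℂ T Δ.mor₂) = LinearMap.ker (Linear.leftComp ℂ T Δ.mor₁) := by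
  ext x
  constructor
  · rintro ⟨y, rfl⟩
    simp [comp_distTriang_mor_zero₁₂_assoc _ hΔ]
  · intro hx
    obtain ⟨y, hy⟩ := Triangle.yoneda_exact₂ Δ hΔ x hx
    exact ⟨y, hy.symm⟩

theorem hom_eq_corank (hft : IsFiniteType C) (T : C) (Δ : Triangle C) (hΔ : Δ ∈ distTriang C) :
    hom T Δ.obj₂ = corank T Δ.mor₁ + corank T Δ.mor₂ :=
  have := hft.finite T Δ.obj₂
  finrank_eq_of_exact (rightComp_exact T Δ hΔ)

theorem hom_eq_contrarank (hft : IsFiniteType C) (T : C) (Δ : Triangle C)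
    (hΔ : Δ ∈ distTriang C) :
    hom Δ.obj₂ T = contrarank T Δ.mor₂ + contrarank T Δ.mor₁ :=
  have := hft.finite Δ.obj₂ T
  finrank_eq_of_exact (leftComp_exact T Δ hΔ)

theorem corank_diagonals (hft : IsFiniteType C) (T : C) {W X E Y Z : C}
    {g : E ⟶ W} {h : W ⟶ X} {a : Y ⟶ W} {b : W ⟶ Z}
    (hgh : LinearMap.range (Linear.rightComp ℂ T g) = LinearMap.ker (Linear.rightComp ℂ T h))
    (hab : LinearMap.range (Linear.rightComp ℂ T a) = LinearMap.ker (Linear.rightComp ℂ T b)) :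
    corank T (g ≫ b) + corank T a = corank T (a ≫ h) + corank T g := by
  have := hft.finite T W
  have h1 : Linear.rightComp ℂ T (g ≫ b) = Linear.rightComp ℂ T b ∘ₗ Linear.rightComp ℂ T g := by
    ext; simp
  have h2 : Linear.rightComp ℂ T (a ≫ h) = Linear.rightComp ℂ T h ∘ₗ Linear.rightComp ℂ T a := by
    ext; simp
  rw [corank, corank, corank, corank, h1, h2]
  exact finrank_range_diagonals hgh hab

theorem rightComp_exact_shift (T : C) {X E W : C}
    {f : X ⟶ E} {g : E ⟶ W} {h : W ⟶ X⟦(1 : ℤ)⟧} (hX : Triangle.mk f g h ∈ distTriang C) :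
    LinearMap.range (Linear.rightComp ℂ T (f⟦(1 : ℤ)⟧')) =
      LinearMap.ker (Linear.rightComp ℂ T (g⟦(1 : ℤ)⟧')) := by
  have h1 : ∀ {X Y : C} (f : X ⟶ Y), Linear.rightComp ℂ T (-f) = -Linear.rightComp ℂ T f := by
    intros; ext; simp
  have h2 : LinearMap.range (Linear.rightComp ℂ T (-f⟦(1 : ℤ)⟧')) =
      LinearMap.ker (Linear.rightComp ℂ T (-g⟦(1 : ℤ)⟧')) :=
    rightComp_exact T _ (rot_of_distTriang _ (rot_of_distTriang _ (rot_of_distTriang _ hX)))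
  rwa [h1, h1, LinearMap.range_neg, LinearMap.ker_neg] at h2

/-- Dimension counts in three consecutive places of the long exact sequence of `Hom(T, -)`. -/
theorem hom_les (hft : IsFiniteType C) (T : C) {X E W : C}
    {f : X ⟶ E} {g : E ⟶ W} {h : W ⟶ X⟦(1 : ℤ)⟧} (hX : Triangle.mk f g h ∈ distTriang C) :
    hom T W = corank T g + corank T h ∧
    hom T (X⟦(1 : ℤ)⟧) = corank T h + corank T (f⟦(1 : ℤ)⟧') ∧
    hom T (E⟦(1 : ℤ)⟧) = corank T (f⟦(1 : ℤ)⟧') + corank T (g⟦(1 : ℤ)⟧') := by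
  have hX₁ := rot_of_distTriang _ hX
  have hX₂ := rot_of_distTriang _ hX₁
  have h1 : hom T W = corank T g + corank T h := hom_eq_corank hft T _ hX₁
  have h2 : hom T (X⟦(1 : ℤ)⟧) = corank T h + corank T (-f⟦(1 : ℤ)⟧') :=
    hom_eq_corank hft T _ hX₂
  have h3 : hom T (E⟦(1 : ℤ)⟧) = corank T (-f⟦(1 : ℤ)⟧') + corank T (-g⟦(1 : ℤ)⟧') :=
    hom_eq_corank hft T _ (rot_of_distTriang _ hX₂)
  rw [corank_neg] at h2 h3
  rw [corank_neg] at h3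
  exact ⟨h1, h2, h3⟩

/-- The octahedral axiom at the level of dimensions: the fibres `E₁` of `E ⟶ W ⟶ Z` and `E₂` of
`Y ⟶ W ⟶ X⟦1⟧` have the same `Hom`-dimensions. -/
theorem hom_octahedron (hft : IsFiniteType C) (T : C) {X E W Y Z E₁ E₂ : C}
    {f : X ⟶ E} {g : E ⟶ W} {h : W ⟶ X⟦(1 : ℤ)⟧} (hX : Triangle.mk f g h ∈ distTriang C)
    {a : Y ⟶ W} {b : W ⟶ Z} {c : Z ⟶ Y⟦(1 : ℤ)⟧} (hY : Triangle.mk a b c ∈ distTriang C)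
    {i₁ : E₁ ⟶ E} {j₁ : Z ⟶ E₁⟦(1 : ℤ)⟧} (h₁ : Triangle.mk i₁ (g ≫ b) j₁ ∈ distTriang C)
    {i₂ : E₂ ⟶ Y} {j₂ : X⟦(1 : ℤ)⟧ ⟶ E₂⟦(1 : ℤ)⟧}
    (h₂ : Triangle.mk i₂ (a ≫ h) j₂ ∈ distTriang C) :
    hom T (E₁⟦(1 : ℤ)⟧) = hom T (E₂⟦(1 : ℤ)⟧) := by
  have d : corank T (g ≫ b) + corank T a = corank T (a ≫ h) + corank T g :=
    corank_diagonals hft T (rightComp_exact T _ (rot_of_distTriang _ hX)) (rightComp_exact T _ hY)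
  have d' : corank T (g⟦(1 : ℤ)⟧' ≫ b⟦(1 : ℤ)⟧') + corank T (a⟦(1 : ℤ)⟧') =
      corank T (a⟦(1 : ℤ)⟧' ≫ h⟦(1 : ℤ)⟧') + corank T (g⟦(1 : ℤ)⟧') :=
    corank_diagonals hft T (rightComp_exact_shift T (rot_of_distTriang _ hX))
      (rightComp_exact_shift T hY)
  rw [← Functor.map_comp, ← Functor.map_comp] at d'
  have w : hom T W = corank T a + corank T b := hom_eq_corank hft T _ hY
  have hx := hom_les hft T hX
  have hy := hom_les hft T hY
  have hp := hom_les hft T h₁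
  have hq := hom_les hft T h₂
  have p : hom T (E₁⟦(1 : ℤ)⟧) = corank T j₁ + corank T (i₁⟦(1 : ℤ)⟧') := hp.2.1
  have q : hom T (E₂⟦(1 : ℤ)⟧) = corank T j₂ + corank T (i₂⟦(1 : ℤ)⟧') := hq.2.1
  omega

theorem hom_congr_left {X Y : C} (e : X ≅ Y) (T : C) : hom X T = hom Y T :=
  (Linear.homCongr ℂ e (Iso.refl T)).finrank_eq

theorem contrarank_le (hft : IsFiniteType C) (T : C) {X Y : C} (f : X ⟶ Y) :
    contrarank T f ≤ hom X T :=
  have := hft.finite X T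
  Submodule.finrank_le _

theorem contrarank_eq_hom_iff (hft : IsFiniteType C) (T : C) {X Y : C} (f : X ⟶ Y) :
    contrarank T f = hom X T ↔ ∀ x : X ⟶ T, ∃ y : Y ⟶ T, f ≫ y = x := by
  have := hft.finite X T
  constructor
  · intro h
    exact LinearMap.range_eq_top.1 (Submodule.eq_top_of_finrank_eq h)
  · intro h
    have : LinearMap.range (Linear.leftComp ℂ T f) = ⊤ := LinearMap.range_eq_top.2 h
    rw [contrarank, this, finrank_top, hom]

theorem contrarank_neg (T : C) {X Y : C} (f : X ⟶ Y) : contrarank T (-f) = contrarank T f := by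
  have : Linear.leftComp ℂ T (-f) = -Linear.leftComp ℂ T f := by ext; simp
  rw [contrarank, this, LinearMap.range_neg, contrarank]

/-- The long exact sequence of `Hom(-, T)` expresses the sum of the ranks of `Hom(f, T)` and
`Hom(f⟦1⟧, T)` through dimensions of `Hom`-spaces. -/
theorem contrarank_add_shift (hft : IsFiniteType C) (T : C) {U V K : C}
    {f : U ⟶ V} {g : V ⟶ K} {h : K ⟶ U⟦(1 : ℤ)⟧} (hU : Triangle.mk f g h ∈ distTriang C) :
    contrarank T f + contrarank T (f⟦(1 : ℤ)⟧') + hom K T = hom V T + hom (U⟦(1 : ℤ)⟧) T := by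
  have hU₁ := rot_of_distTriang _ hU
  have h1 : hom V T = contrarank T g + contrarank T f := hom_eq_contrarank hft T _ hU
  have h2 : hom K T = contrarank T h + contrarank T g := hom_eq_contrarank hft T _ hU₁
  have h3 : hom (U⟦(1 : ℤ)⟧) T = contrarank T (-f⟦(1 : ℤ)⟧') + contrarank T h :=
    hom_eq_contrarank hft T _ (rot_of_distTriang _ hU₁)
  rw [contrarank_neg] at h3
  omega

/-- Descending induction along the shifts of `f`, starting where `Hom(U⟦k⟧, A)` vanishes. -/
theorem contrarank_eq_of_vanishing (hft : IsFiniteType C) {A B : C}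
    (hAB : ∀ T, hom T A = hom T B) (n : ℕ) : ∀ {U V : C} (f : U ⟶ V),
      (∀ k : ℕ, n ≤ k → hom (U⟦(k : ℤ)⟧) A = 0) → contrarank A f = contrarank B f := by
  induction n with
  | zero =>
    intro U V f h
    have h0 : hom U A = 0 := by
      rw [← h 0 le_rfl]
      exact hom_congr_left ((shiftFunctorZero C ℤ).app U).symm A
    have h1 := contrarank_le hft A f
    have h2 := contrarank_le hft B f
    rw [← hAB U] at h2
    omega
  | succ n ih =>
    intro U V f h
    obtain ⟨K, g, c, hd⟩ := distinguished_cocone_triangle f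
    have h1 := contrarank_add_shift hft A hd
    have h2 := contrarank_add_shift hft B hd
    rw [← hAB, ← hAB, ← hAB] at h2
    have h3 := ih (f⟦(1 : ℤ)⟧') (fun k hk => by
      rw [← h (k + 1) (by omega)]
      exact hom_congr_left
        ((shiftFunctorAdd' C (1 : ℤ) (k : ℤ) ((k + 1 : ℕ) : ℤ) (by push_cast; ring)).app U).symm A)
    omega

theorem exists_hom_shift_eq_zero (hft : IsFiniteType C) (U A : C) :
    ∃ n : ℕ, ∀ k : ℕ, n ≤ k → hom (U⟦(k : ℤ)⟧) A = 0 := by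
  obtain ⟨m, hm⟩ := (hft U A).1.bddBelow
  refine ⟨(-m + 1).toNat, fun k hk => ?_⟩
  have hs : Subsingleton (U ⟶ A⟦(-(k : ℤ))⟧) := by
    by_contra hn
    have := hm hn
    omega
  have : Subsingleton (U⟦(k : ℤ)⟧ ⟶ A) := by
    refine ⟨fun x y => (shiftFunctor C (-(k : ℤ))).map_injective ?_⟩
    rw [← cancel_epi ((shiftFunctorCompIsoId C (k : ℤ) (-k) (by simp)).inv.app U)]
    exact hs.elim _ _
  exact Module.finrank_zero_of_subsingleton

/-- The dimensions of all `Hom(T, A)` determine the rank of `Hom(f, A)` for every `f`. -/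
theorem contrarank_eq (hft : IsFiniteType C) {A B : C}
    (hAB : ∀ T, hom T A = hom T B) {U V : C} (f : U ⟶ V) : contrarank A f = contrarank B f := by
  obtain ⟨n, hn⟩ := exists_hom_shift_eq_zero hft U A
  exact contrarank_eq_of_vanishing hft hAB n f hn

/-- Whether every morphism to `A` factors through `f` depends only on the dimensions of the
spaces `Hom(T, A)`. -/
theorem surjective_transfer (hft : IsFiniteType C) {A B : C}
    (hAB : ∀ T, hom T A = hom T B) {U V : C} (f : U ⟶ V)
    (h : ∀ x : U ⟶ A, ∃ y : V ⟶ A, f ≫ y = x) (x : U ⟶ B) : ∃ y : V ⟶ B, f ≫ y = x := by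
  refine (contrarank_eq_hom_iff hft B f).1 ?_ x
  rw [← contrarank_eq hft hAB, ← hAB, contrarank_eq_hom_iff hft]
  exact h

theorem lift_comp_eq_sum {r : ℕ} {A B T : C} (γ : Fin r → (B ⟶ A))
    (y : (⨁ fun _ : Fin r => A) ⟶ T) :
    biproduct.lift γ ≫ y = ∑ j, γ j ≫ biproduct.ι (fun _ : Fin r => A) j ≫ y := by
  have hy : y = biproduct.desc fun j => biproduct.ι (fun _ : Fin r => A) j ≫ y := by
    ext; simp
  rw [hy, biproduct.lift_desc, ← hy]

/-- If all `Hom(T, A)` and `Hom(T, B)` have equal dimensions, then `B` is a direct summand of a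
power of `A`: the map `B ⟶ ⨁ A` given by a basis of `Hom(B, A)` is a split monomorphism. -/
theorem exists_sum_comp_eq_id (hft : IsFiniteType C) {A B : C}
    (hAB : ∀ T, hom T A = hom T B) :
    ∃ (d : ℕ) (i : Fin d → (B ⟶ A)) (p : Fin d → (A ⟶ B)), ∑ j, i j ≫ p j = 𝟙 B := by
  have := hft.finite B A
  let b := Module.finBasis ℂ (B ⟶ A)
  let φ : B ⟶ ⨁ fun _ : Fin (Module.finrank ℂ (B ⟶ A)) => A := biproduct.lift fun j => b j
  obtain ⟨ψ, hψ⟩ := surjective_transfer hft hAB φ (fun x => by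
    refine ⟨biproduct.desc fun j => b.repr x j • 𝟙 A, ?_⟩
    rw [biproduct.lift_desc]
    simp) (𝟙 B)
  exact ⟨_, fun j => b j, fun j => biproduct.ι (fun _ => A) j ≫ ψ,
    (lift_comp_eq_sum _ ψ).symm.trans hψ⟩

/-- `Hom(B, A)` is a left module over `End A` by postcomposition, compatibly with scalars. -/
instance (A B : C) : IsScalarTower ℂ (End A) (B ⟶ A) where
  smul_assoc z γ q := Linear.comp_smul _ _ _ q z γ

/-- If all `Hom(T, A)` and `Hom(T, B)` have equal dimensions, then the `End A`-module `Hom(B, A)`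
has the same `Hom`-dimensions into `End A ⧸ I` as `End A`. With `I` generated by the components of
`φ : A ⟶ ⨁ A`, the space `Hom(Hom(B, A), End A ⧸ I)` is the cokernel of `Hom(φ, B)`, while
`End A ⧸ I` is the cokernel of `Hom(φ, A)`. -/
theorem finrank_hom_quotient (hft : IsFiniteType C) {A B : C}
    (hAB : ∀ T, hom T A = hom T B) (I : Ideal (End A)) :
    Module.finrank ℂ ((B ⟶ A) →ₗ[End A] End A ⧸ I) = Module.finrank ℂ (End A ⧸ I) := by
  have := hft.finite A B
  have : Module.Finite ℂ (End A) := hft.finite A A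
  have : IsNoetherian (End A) (End A) := isNoetherian_of_tower ℂ inferInstance
  obtain ⟨d, i, p, hip⟩ := exists_sum_comp_eq_id hft hAB
  obtain ⟨r, γ, hγ⟩ := Submodule.fg_iff_exists_fin_generating_family.1 (IsNoetherian.noetherian I)
  let φ : A ⟶ ⨁ fun _ : Fin r => A := biproduct.lift fun j => γ j
  have hφ : ∀ {T : C} (y : (⨁ fun _ : Fin r => A) ⟶ T),
      φ ≫ y = ∑ j, (show A ⟶ A from γ j) ≫ biproduct.ι (fun _ : Fin r => A) j ≫ y := by
    intro T y
    exact lift_comp_eq_sum _ y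
  have hI : ∀ x : A ⟶ A, (show End A from x) ∈ I ↔ ∃ y, φ ≫ y = x := by
    intro x
    rw [← hγ, Submodule.mem_span_range_iff_exists_fun]
    constructor
    · rintro ⟨c, hc⟩
      refine ⟨biproduct.desc fun j => c j, ?_⟩
      rw [hφ]
      simpa using hc
    · rintro ⟨y, hy⟩
      refine ⟨fun j => biproduct.ι (fun _ : Fin r => A) j ≫ y, ?_⟩
      rw [hφ] at hy
      exact hy
  let Ψ : (A ⟶ B) →ₗ[ℂ] ((B ⟶ A) →ₗ[End A] End A ⧸ I) :=
    { toFun := fun c =>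
        { toFun := fun q => I.mkQ (c ≫ q)
          map_add' := fun q q' => by rw [Preadditive.comp_add]; exact map_add I.mkQ _ _
          map_smul' := fun γ q => by
            rw [RingHom.id_apply, ← map_smul]
            exact congrArg I.mkQ (Category.assoc _ _ _).symm }
      map_add' := fun c c' => by
        ext q
        change I.mkQ ((c + c') ≫ q) = _
        rw [Preadditive.add_comp]; exact map_add I.mkQ _ _
      map_smul' := fun z c => by
        ext q
        change I.mkQ ((z • c) ≫ q) = _
        rw [Linear.smul_comp]; rfl }
  -- `q = ∑ (p j ≫ q) • i j`, so a homomorphism is determined by its values on the `i j`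
  have hΨ : Function.Surjective Ψ := by
    intro h
    choose c hc using fun j => Submodule.mkQ_surjective I (h (i j))
    refine ⟨∑ j, (show A ⟶ A from c j) ≫ p j, LinearMap.ext fun q => ?_⟩
    have hq : q = ∑ j, (show End A from p j ≫ q) • i j := by
      calc q = (∑ j, i j ≫ p j) ≫ q := by rw [hip, Category.id_comp]
        _ = _ := by
          rw [Preadditive.sum_comp]
          exact Finset.sum_congr rfl fun j _ => Category.assoc _ _ _
    have hq' : h q = ∑ j, (show End A from p j ≫ q) • h (i j) := by
      conv_lhs => rw [hq, map_sum]
      exact Finset.sum_congr rfl fun j _ => map_smul _ _ _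
    rw [hq']
    change I.mkQ ((∑ j, (show A ⟶ A from c j) ≫ p j) ≫ q) = _
    rw [Preadditive.sum_comp]
    refine (map_sum I.mkQ _ _).trans (Finset.sum_congr rfl fun j _ => ?_)
    rw [← hc, ← map_smul]
    exact congrArg I.mkQ (Category.assoc _ _ _)
  have hker : LinearMap.ker Ψ = LinearMap.range (Linear.leftComp ℂ B φ) := by
    ext c
    rw [LinearMap.mem_ker]
    constructor
    · intro hc
      have h1 : ∀ j, ∃ y, φ ≫ y = c ≫ i j := fun j =>
        (hI _).1 ((Submodule.Quotient.mk_eq_zero I).1 (LinearMap.congr_fun hc (i j)))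
      choose y hy using h1
      refine ⟨∑ j, y j ≫ p j, ?_⟩
      change φ ≫ (∑ j, y j ≫ p j) = c
      rw [← Category.comp_id c, ← hip, Preadditive.comp_sum, Preadditive.comp_sum]
      refine Finset.sum_congr rfl fun j _ => ?_
      rw [← Category.assoc, hy, Category.assoc]
    · rintro ⟨y, rfl⟩
      refine LinearMap.ext fun q => ?_
      refine (Submodule.Quotient.mk_eq_zero I).2 ((hI _).2 ⟨y ≫ q, ?_⟩)
      exact (Category.assoc _ _ _).symm
  have h1 : Module.finrank ℂ ((B ⟶ A) →ₗ[End A] End A ⧸ I) + contrarank B φ =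
      Module.finrank ℂ (A ⟶ B) := by
    have h1 := LinearMap.finrank_range_add_finrank_ker Ψ
    rwa [LinearMap.range_eq_top.2 hΨ, finrank_top, hker] at h1
  have h2 := contrarank_eq hft hAB φ
  have h3 : contrarank A φ = Module.finrank ℂ (I.restrictScalars ℂ) := by
    have : LinearMap.range (Linear.leftComp ℂ A φ) = I.restrictScalars ℂ := by
      ext x
      exact (hI x).symm
    exact congrArg (fun S : Submodule ℂ (A ⟶ A) => Module.finrank ℂ S) this
  have h4 := Submodule.finrank_quotient_add_finrank (I.restrictScalars ℂ)
  have h5 : Module.finrank ℂ (End A) = Module.finrank ℂ (A ⟶ B) := hAB A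
  have h6 : Module.finrank ℂ (End A ⧸ I) = Module.finrank ℂ (End A ⧸ I.restrictScalars ℂ) := rfl
  omega

/-- Objects are determined by the dimensions of `Hom`-spaces into them: a generator `f` of the
`End A`-module `Hom(B, A)` is an isomorphism. -/
theorem nonempty_iso_of_hom_eq (hft : IsFiniteType C) {A B : C}
    (hAB : ∀ T, hom T A = hom T B) : Nonempty (B ≅ A) := by
  have := hft.finite A B
  have := hft.finite A A
  have : Module.Finite ℂ (End A) := hft.finite A A
  have := hft.finite B A
  obtain ⟨f, hf⟩ := exists_cyclic (k := ℂ) (R := End A) (B ⟶ A) (finrank_hom_quotient hft hAB)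
  obtain ⟨g, hg⟩ := surjective_transfer hft hAB f hf (𝟙 B)
  have hinj : Function.Injective (Linear.rightComp ℂ A f) := by
    intro x y hxy
    have : (x ≫ f) ≫ g = (y ≫ f) ≫ g := congrArg (· ≫ g) hxy
    simpa [hg] using this
  obtain ⟨h, hh⟩ := (LinearMap.injective_iff_surjective_of_finrank_eq_finrank
    (hAB A).symm).1 hinj (𝟙 A)
  have hh' : h ≫ f = 𝟙 A := hh
  have : g = h := by rw [← Category.id_comp g, ← hh', Category.assoc, hg, Category.comp_id]
  exact ⟨⟨f, g, hg, this ▸ hh'⟩⟩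

end Hom

/-! ### Extensions -/

section Extensions
variable {C : Type u} [Category.{v} C] [Preadditive C] [HasZeroObject C]
  [HasShift C ℤ] [∀ n : ℤ, (shiftFunctor C n).Additive] [Pretriangulated C]

/-- `E` is an extension of `W` by `X`: there is an exact triangle `X → E → W → X⟦1⟧`. -/
def IsExt (X E W : C) : Prop :=
  ∃ (f : X ⟶ E) (g : E ⟶ W) (h : W ⟶ X⟦(1 : ℤ)⟧), Triangle.mk f g h ∈ distTriang C

theorem IsExt.of_triangle (T : Triangle C) (hT : T ∈ distTriang C) :
    IsExt T.obj₁ T.obj₂ T.obj₃ := ⟨T.mor₁, T.mor₂, T.mor₃, hT⟩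

theorem IsExt.iso {X E W X' E' W' : C} (h : IsExt X E W) (eX : X ≅ X') (eE : E ≅ E')
    (eW : W ≅ W') : IsExt X' E' W' := by
  obtain ⟨f, g, h, hT⟩ := h
  refine ⟨eX.inv ≫ f ≫ eE.hom, eE.inv ≫ g ≫ eW.hom, eW.inv ≫ h ≫ eX.hom⟦(1 : ℤ)⟧', ?_⟩
  refine isomorphic_distinguished _ hT _ (Triangle.isoMk _ _ eX.symm eE.symm eW.symm ?_ ?_ ?_)
  · change (eX.inv ≫ f ≫ eE.hom) ≫ eE.inv = eX.inv ≫ f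
    simp
  · change (eE.inv ≫ g ≫ eW.hom) ≫ eW.inv = eE.inv ≫ g
    simp
  · change (eW.inv ≫ h ≫ eX.hom⟦(1 : ℤ)⟧') ≫ eX.inv⟦(1 : ℤ)⟧' = eW.inv ≫ h
    simp only [Category.assoc, ← Functor.map_comp, Iso.hom_inv_id, CategoryTheory.Functor.map_id,
      Category.comp_id]

theorem IsExt.rotate {X E W : C} (h : IsExt X E W) : IsExt E W (X⟦(1 : ℤ)⟧) := by
  obtain ⟨f, g, h, hT⟩ := h
  exact .of_triangle _ (rot_of_distTriang _ hT)

theorem IsExt.of_isZero_left {Z : C} (hZ : IsZero Z) (X : C) : IsExt Z X X :=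
  (IsExt.of_triangle _ (contractible_distinguished₁ X)).iso ((isZero_zero C).iso hZ)
    (Iso.refl _) (Iso.refl _)

theorem IsExt.of_isZero_right {Z : C} (hZ : IsZero Z) (X : C) : IsExt X X Z :=
  (IsExt.of_triangle _ (contractible_distinguished X)).iso (Iso.refl _)
    (Iso.refl _) ((isZero_zero C).iso hZ)

theorem IsExt.nonempty_iso {X E Z : C} (h : IsExt X E Z) (hZ : IsZero Z) : Nonempty (X ≅ E) := by
  obtain ⟨f, g, h, hT⟩ := h
  have : IsIso f := (Triangle.isZero₃_iff_isIso₁ _ hT).1 hZ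
  exact ⟨asIso f⟩

theorem IsExt.shift {X E W : C} (h : IsExt X E W) (n : ℤ) : IsExt (X⟦n⟧) (E⟦n⟧) (W⟦n⟧) := by
  obtain ⟨f, g, h, hT⟩ := h
  exact .of_triangle _ (Triangle.shift_distinguished _ hT n)

theorem IsExt.map {X E W : C} (h : IsExt X E W) (F : C ⥤ C) [F.CommShift ℤ] [F.IsTriangulated] :
    IsExt (F.obj X) (F.obj E) (F.obj W) := by
  obtain ⟨f, g, h, hT⟩ := h
  exact .of_triangle _ (F.map_distinguished _ hT)

/-- The product of a family over a two-element type is a biproduct. -/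
noncomputable def piWalkingPairIso (X : WalkingPair → C) :
    (∏ᶜ X) ≅ X .left ⊞ X .right where
  hom := biprod.lift (Pi.π X .left) (Pi.π X .right)
  inv := Pi.lift fun
    | .left => biprod.fst
    | .right => biprod.snd
  hom_inv_id := by
    refine Pi.hom_ext _ _ ?_
    rintro (_ | _) <;> simp
  inv_hom_id := by ext <;> simp

theorem IsExt.biprod {X E W X' E' W' : C} (h : IsExt X E W) (h' : IsExt X' E' W') :
    IsExt (X ⊞ X') (E ⊞ E') (W ⊞ W') := by
  obtain ⟨f, g, h, hT⟩ := h
  obtain ⟨f', g', h', hT'⟩ := h'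
  let T : WalkingPair → Triangle C := fun
    | .left => Triangle.mk f g h
    | .right => Triangle.mk f' g' h'
  have hd := productTriangle_distinguished T (by rintro (_ | _) <;> assumption)
  exact (IsExt.of_triangle _ hd).iso (piWalkingPairIso fun j => (T j).obj₁)
    (piWalkingPairIso fun j => (T j).obj₂) (piWalkingPairIso fun j => (T j).obj₃)

/-- Extensions are associative. In a category with the octahedral axiom this is that axiom; here
the two candidates for `E'` are isomorphic because they have the same `Hom`-dimensions. -/
theorem IsExt.assoc [Linear ℂ C] (hft : IsFiniteType C) {X E W Y Z : C} (h₁ : IsExt X E W)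
    (h₂ : IsExt Y W Z) : ∃ E', IsExt X E' Y ∧ IsExt E' E Z := by
  obtain ⟨f, g, h, hX⟩ := h₁
  obtain ⟨a, b, c, hY⟩ := h₂
  obtain ⟨E₁, i₁, j₁, hE₁⟩ := distinguished_cocone_triangle₁ (g ≫ b)
  obtain ⟨E₂, i₂, j₂, hE₂⟩ := distinguished_cocone_triangle₁ (a ≫ h)
  obtain ⟨e⟩ := nonempty_iso_of_hom_eq hft fun T => hom_octahedron hft T hX hY hE₁ hE₂
  have e' : E₂ ≅ E₁ := (shiftFunctor C (1 : ℤ)).preimageIso e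
  refine ⟨E₁, ?_, .of_triangle _ hE₁⟩
  exact (IsExt.of_triangle _ (inv_rot_of_distTriang _ hE₂)).iso
    ((shiftFunctorCompIsoId C (1 : ℤ) (-1) (by simp)).app X) e' (Iso.refl _)

end Extensions

/-! ### Objects built from shifts of a given object -/

section Built
open scoped ZeroObject
variable {C : Type u} [Category.{v} C] [Preadditive C] [HasZeroObject C]
  [HasShift C ℤ] [∀ n : ℤ, (shiftFunctor C n).Additive] [Pretriangulated C]

/-- Additive functors preserve biproducts of two objects. -/
noncomputable def biprodIso (F : C ⥤ C) [F.Additive] (A B : C) :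
    F.obj (A ⊞ B) ≅ F.obj A ⊞ F.obj B :=
  have := preservesBinaryBiproducts_of_preservesBiproducts F
  F.mapBiprod A B

/-- `Built M l A`: the object `A` has a filtration whose subquotients, from the top down, are
`M⟦n⟧` for `n` in the list `l`. -/
def Built (M : C) : List ℤ → C → Prop
  | [], A => IsZero A
  | n :: l, A => ∃ A', Built M l A' ∧ IsExt A' A (M⟦n⟧)

theorem Built.iso {M : C} {l : List ℤ} {A B : C} (h : Built M l A) (e : A ≅ B) : Built M l B := by
  cases l with
  | nil => exact IsZero.of_iso h e.symm
  | cons n l =>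
    obtain ⟨A', h1, h2⟩ := h
    exact ⟨A', h1, h2.iso (Iso.refl _) e (Iso.refl _)⟩

/-- Filtrations of the two ends of a triangle concatenate to a filtration of the middle. -/
theorem Built.append [Linear ℂ C] (hft : IsFiniteType C) {M X : C} {l' : List ℤ}
    (hX : Built M l' X) : ∀ {l : List ℤ} {E W : C}, Built M l W → IsExt X E W →
      Built M (l ++ l') E
  | [], _, _, hW, h => hX.iso (h.nonempty_iso hW).some
  | _ :: _, _, _, ⟨_, h1, h2⟩, h =>
    have ⟨E', h3, h4⟩ := h.assoc hft h2
    ⟨E', hX.append hft h1 h3, h4⟩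

theorem Built.shift {M : C} (m : ℤ) : ∀ {l : List ℤ} {A : C}, Built M l A →
    Built M (l.map (· + m)) (A⟦m⟧)
  | [], _, h => (shiftFunctor C m).map_isZero h
  | n :: _, _, ⟨A', h1, h2⟩ => ⟨A'⟦m⟧, h1.shift m, (h2.shift m).iso (Iso.refl _) (Iso.refl _)
      ((shiftFunctorAdd C n m).app M).symm⟩

theorem Built.map {M : C} (F : C ⥤ C) [F.CommShift ℤ] [F.IsTriangulated] :
    ∀ {l : List ℤ} {A : C}, Built M l A → Built (F.obj M) l (F.obj A)
  | [], _, h => F.map_isZero h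
  | n :: _, _, ⟨A', h1, h2⟩ => ⟨F.obj A', h1.map F, (h2.map F).iso (Iso.refl _) (Iso.refl _)
      ((F.commShiftIso n).app M)⟩

theorem Built.singleton (M : C) : Built M [0] M :=
  ⟨0, isZero_zero C, (IsExt.of_isZero_left (isZero_zero C) M).iso (Iso.refl _) (Iso.refl _)
    ((shiftFunctorZero C ℤ).app M).symm⟩

/-- `A` is a direct summand of an object filtered with subquotients `M⟦n⟧`, `n ∈ l`. -/
def SplitBuilt (M : C) (l : List ℤ) (A : C) : Prop := ∃ A', Built M l (A ⊞ A')

theorem Built.splitBuilt {M : C} {l : List ℤ} {A : C} (h : Built M l A) : SplitBuilt M l A :=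
  ⟨0, h.iso (isoBiprodZero (isZero_zero C))⟩

/-- If `B` is built from `A` and `N` from `B`, then `N` is built from `A` up to a direct summand:
each step `B⟦n⟧` is replaced by a shifted copy of the filtration of `B ⊞ B'`. -/
theorem SplitBuilt.trans_built [Linear ℂ C] (hft : IsFiniteType C) {A B : C} {s : List ℤ}
    (hB : SplitBuilt A s B) : ∀ {l : List ℤ} {N : C}, Built B l N →
      SplitBuilt A (l.flatMap fun n => s.map (· + n)) N
  | [], N, h => Built.splitBuilt (C := C) (l := []) h
  | n :: l, N, ⟨N', h1, h2⟩ => by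
    obtain ⟨N₁, h3⟩ := hB.trans_built hft h1
    obtain ⟨B', h4⟩ := hB
    -- `N' ⊞ N₁ → N ⊞ (N₁ ⊞ B'⟦n⟧) → B⟦n⟧ ⊞ B'⟦n⟧`
    have h5 : IsExt (N₁ ⊞ 0) (N₁ ⊞ B'⟦n⟧) (0 ⊞ B'⟦n⟧) :=
      (IsExt.of_isZero_right (isZero_zero C) N₁).biprod (.of_isZero_left (isZero_zero C) _)
    have h6 : IsExt (N' ⊞ N₁) (N ⊞ (N₁ ⊞ B'⟦n⟧)) (B⟦n⟧ ⊞ B'⟦n⟧) :=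
      h2.biprod (h5.iso (isoBiprodZero (isZero_zero C)).symm (Iso.refl _)
        (isoZeroBiprod (isZero_zero C)).symm)
    refine ⟨_, h3.append hft (h4.shift n)
      (h6.iso (Iso.refl _) (Iso.refl _) (biprodIso (shiftFunctor C n) B B').symm)⟩

theorem SplitBuilt.trans [Linear ℂ C] (hft : IsFiniteType C) {A B : C} {s l : List ℤ} {N : C}
    (hB : SplitBuilt A s B) (hN : SplitBuilt B l N) :
    SplitBuilt A (l.flatMap fun n => s.map (· + n)) N := by
  obtain ⟨N', h⟩ := hN
  obtain ⟨N'', h'⟩ := hB.trans_built hft h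
  exact ⟨_, h'.iso (biprod.associator _ _ _)⟩

theorem SplitBuilt.map {M : C} (F : C ⥤ C) [F.Additive] [F.CommShift ℤ] [F.IsTriangulated]
    {l : List ℤ} {A : C} (h : SplitBuilt M l A) : SplitBuilt (F.obj M) l (F.obj A) := by
  obtain ⟨A', h⟩ := h
  exact ⟨F.obj A', (h.map F).iso (biprodIso F A A')⟩

/-- The objects obtained from `G` by finitely many extensions, shifts and direct summands form a
thick subcategory, so they exhaust a category split-generated by `G`. -/
theorem exists_splitBuilt [Linear ℂ C] (hft : IsFiniteType C) {G : C}
    (hG : IsSplitGenerator C G) (X : C) : ∃ l, SplitBuilt G l X := by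
  refine hG X {X | ∃ l, SplitBuilt G l X} ⟨⟨?_, ?_, ?_, ?_⟩, ?_⟩
  · rintro X Y e ⟨l, X', h⟩
    exact ⟨l, X', h.iso (biprod.mapIso e (Iso.refl _))⟩
  · rintro X n ⟨l, h⟩
    obtain ⟨X', h⟩ := h
    exact ⟨_, _, (h.shift n).iso (biprodIso (shiftFunctor C n) X X')⟩
  · rintro T hT ⟨l, X', h⟩ ⟨l', Y', h'⟩
    have h1 : IsExt T.obj₂ T.obj₃ (T.obj₁⟦(1 : ℤ)⟧) := (IsExt.of_triangle T hT).rotate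
    have h5 : IsExt (Y' ⊞ 0) (Y' ⊞ X'⟦(1 : ℤ)⟧) (0 ⊞ X'⟦(1 : ℤ)⟧) :=
      (IsExt.of_isZero_right (isZero_zero C) Y').biprod (.of_isZero_left (isZero_zero C) _)
    have h6 := h1.biprod (h5.iso (isoBiprodZero (isZero_zero C)).symm (Iso.refl _)
        (isoZeroBiprod (isZero_zero C)).symm)
    exact ⟨_, _, h'.append hft (h.shift 1)
      (h6.iso (Iso.refl _) (Iso.refl _) (biprodIso (shiftFunctor C (1 : ℤ)) _ _).symm)⟩
  · rintro X Y ⟨l, Z, h⟩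
    exact ⟨l, _, h.iso (biprod.associator _ _ _)⟩
  · exact ⟨_, (Built.singleton G).splitBuilt⟩

end Built

/-! ### Complexity -/

section Complexity
variable {C : Type u} [Category.{v} C] [Preadditive C] [HasZeroObject C]
  [HasShift C ℤ] [∀ n : ℤ, (shiftFunctor C n).Additive] [Pretriangulated C]

/-- The weight `Σ exp(n t)` over `n ∈ l`. -/
noncomputable def cost (t : ℝ) (l : List ℤ) : ℝ≥0∞ :=
  (l.map fun n : ℤ => ENNReal.ofReal (Real.exp ((n : ℝ) * t))).sum

theorem cost_flatMap (t : ℝ) (l s : List ℤ) :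
    cost t (l.flatMap fun n => s.map (· + n)) = cost t l * cost t s := by
  have hs (n : ℤ) : cost t (s.map (· + n)) =
      ENNReal.ofReal (Real.exp ((n : ℝ) * t)) * cost t s := by
    rw [cost, cost, ← List.sum_map_mul_left, List.map_map]
    refine congrArg List.sum (List.map_congr_left fun m _ => ?_)
    rw [← ENNReal.ofReal_mul (Real.exp_pos _).le, ← Real.exp_add]
    simp only [Function.comp]
    push_cast
    ring_nf
  induction l with
  | nil => simp [cost]
  | cons n l ih =>
    have h1 : cost t (n :: l) = ENNReal.ofReal (Real.exp ((n : ℝ) * t)) + cost t l := by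
      simp [cost]
    have h2 (l l' : List ℤ) : cost t (l ++ l') = cost t l + cost t l' := by simp [cost]
    rw [List.flatMap_cons, h2, ih, hs, h1, add_mul]

theorem cost_ne_top (t : ℝ) (l : List ℤ) : cost t l ≠ ⊤ := by
  induction l with
  | nil => simp [cost]
  | cons n l ih =>
    have h1 : cost t (n :: l) = ENNReal.ofReal (Real.exp ((n : ℝ) * t)) + cost t l := by
      simp [cost]
    rw [h1]
    exact ENNReal.add_ne_top.2 ⟨ENNReal.ofReal_ne_top, ih⟩

/-- The list records the steps of the filtration from the top down, hence the reversal. -/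
theorem built_of_filtration {M : C} (p : ℕ) : ∀ (n : Fin p → ℤ) (A : Fin (p + 1) → C),
    IsZero (A 0) → (∀ i : Fin p, IsExt (A i.castSucc) (A i.succ) (M⟦n i⟧)) →
    Built M (List.ofFn n).reverse (A (Fin.last p)) := by
  induction p with
  | zero => intro n A h0 _; simpa [Built] using h0
  | succ p ih =>
    intro n A h0 h
    rw [List.ofFn_succ_last, List.reverse_concat]
    exact ⟨_, ih _ (fun i => A i.castSucc) h0 fun i => h i.castSucc, h (Fin.last p)⟩

theorem exists_filtration {M : C} {l : List ℤ} : ∀ {B : C}, Built M l B →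
    ∃ (n : Fin l.length → ℤ) (A : Fin (l.length + 1) → C), IsZero (A 0) ∧
      A (Fin.last _) = B ∧ (∀ i, IsExt (A i.castSucc) (A i.succ) (M⟦n i⟧)) ∧
      (List.ofFn n).reverse = l := by
  induction l with
  | nil => intro B h; exact ⟨Fin.elim0, fun _ => B, h, rfl, fun i => i.elim0, by simp⟩
  | cons m l ih =>
    rintro B ⟨B', h1, h2⟩
    obtain ⟨n, A, h0, hl, he, hn⟩ := ih h1
    refine ⟨Fin.snoc (α := fun _ => ℤ) n m, Fin.snoc (α := fun _ => C) A B, ?_, ?_, ?_, ?_⟩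
    · have : (0 : Fin (l.length + 1 + 1)) = Fin.castSucc 0 := rfl
      rw [this, Fin.snoc_castSucc]
      exact h0
    · exact Fin.snoc_last _ _
    · intro i
      induction i using Fin.lastCases with
      | last =>
        rw [Fin.snoc_castSucc, Fin.snoc_last, hl, Fin.succ_last]
        exact (Fin.snoc_last (α := fun _ => C) B A).symm ▸ h2
      | cast i =>
        rw [Fin.snoc_castSucc, Fin.succ_castSucc, Fin.snoc_castSucc, Fin.snoc_castSucc]
        exact he i
    · refine (congrArg List.reverse (List.ofFn_succ_last (n := l.length))).trans ?_
      rw [List.reverse_concat]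
      simp [hn]

theorem complexity_eq {G : C} (hG : IsSplitGenerator C G) (t : ℝ) {N : C} (hN : ¬ IsZero N) :
    complexity C t G N = ⨅ (l : List ℤ) (_ : SplitBuilt G l N), cost t l := by
  rw [complexity, if_neg hN, if_pos (hG N)]
  apply le_antisymm
  · refine le_iInf₂ fun l h => sInf_le ?_
    obtain ⟨N', h⟩ := h
    obtain ⟨n, A, h0, hl, he, hn⟩ := exists_filtration h
    refine ⟨l.length, ?_, n, A, N', h0, ⟨eqToIso hl⟩, he, ?_⟩
    · cases l with
      | nil =>
        exact absurd (IsZero.of_mono biprod.inl h) hN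
      | cons => simp
    · conv_lhs => rw [cost, ← hn]
      rw [List.map_reverse, List.sum_reverse, List.map_ofFn, List.sum_ofFn]
      rfl
  · refine le_sInf ?_
    rintro _ ⟨p, -, n, A, N', h0, ⟨e⟩, h, rfl⟩
    refine (iInf₂_le (List.ofFn n).reverse ⟨N', (built_of_filtration p n A h0 h).iso e⟩).trans ?_
    rw [cost, List.map_reverse, List.sum_reverse, List.map_ofFn, List.sum_ofFn]
    rfl

end Complexity

/-! ### Comparison of growth rates -/

section Entropy

/-- If `a (n + 1) ≤ K * b n` for all `n`, the exponential growth rate of `a` is at most that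
of `b`. -/
theorem limsup_log_le {a b : ℕ → ℝ≥0∞} {K : ℝ≥0∞} (hK : K ≠ 0) (hK' : K ≠ ⊤)
    (h : ∀ n, a (n + 1) ≤ K * b n) :
    atTop.limsup (fun m : ℕ => (((m : ℝ)⁻¹ : ℝ) : EReal) * (a m).log) ≤
      atTop.limsup (fun m : ℕ => (((m : ℝ)⁻¹ : ℝ) : EReal) * (b m).log) := by
  rw [← limsup_nat_add _ 1]
  refine EReal.le_of_forall_lt_iff_le.1 fun z hz => ?_
  obtain ⟨r, hr, hrz⟩ := EReal.lt_iff_exists_real_btwn.1 hz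
  rw [EReal.coe_lt_coe_iff] at hrz
  obtain ⟨κ, hκ⟩ : ∃ κ : ℝ, K.log = κ := by
    refine ⟨K.log.toReal, (EReal.coe_toReal ?_ ?_).symm⟩
    · simpa using hK'
    · simpa using hK
  have hlim : Tendsto (fun n : ℕ => (((n + 1 : ℕ) : ℝ)⁻¹) * (κ + n * r)) atTop (nhds r) := by
    have h1 : Tendsto (fun n : ℕ => (κ - r) * (1 / ((n : ℝ) + 1)) + r) atTop
        (nhds ((κ - r) * 0 + r)) :=
      (tendsto_one_div_add_atTop_nhds_zero_nat.const_mul _).add_const _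
    rw [mul_zero, zero_add] at h1
    refine h1.congr fun n => ?_
    have : (n : ℝ) + 1 ≠ 0 := by positivity
    push_cast
    field_simp
    ring
  refine limsup_le_of_le (by isBoundedDefault) ?_
  filter_upwards [eventually_lt_of_limsup_lt hr, hlim.eventually_lt_const hrz,
    eventually_gt_atTop 0] with n hn hnz hn0
  have hn0' : (0 : ℝ) < n := by exact_mod_cast hn0
  have hb : (b n).log ≤ ((n * r : ℝ) : EReal) := by
    generalize (b n).log = x at hn
    induction x with
    | bot => exact bot_le
    | top =>
      rw [EReal.coe_mul_top_of_pos (by positivity)] at hn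
      exact absurd hn (by simp)
    | coe x =>
      rw [← EReal.coe_mul, EReal.coe_lt_coe_iff, inv_mul_lt_iff₀ hn0'] at hn
      exact EReal.coe_le_coe_iff.2 hn.le
  have ha : (a (n + 1)).log ≤ ((κ + n * r : ℝ) : EReal) := by
    refine (ENNReal.log_monotone (h n)).trans ?_
    rw [ENNReal.log_mul_add, hκ, EReal.coe_add]
    gcongr
  calc (((((n + 1 : ℕ) : ℝ)⁻¹ : ℝ)) : EReal) * (a (n + 1)).log
      ≤ (((((n + 1 : ℕ) : ℝ)⁻¹ : ℝ)) : EReal) * ((κ + n * r : ℝ) : EReal) := by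
        refine mul_le_mul_of_nonneg_left ha ?_
        exact_mod_cast (by positivity : (0 : ℝ) ≤ ((n + 1 : ℕ) : ℝ)⁻¹)
    _ ≤ z := by
        rw [← EReal.coe_mul]
        exact EReal.coe_le_coe_iff.2 hnz.le

variable {C : Type u} [Category.{v} C] [Preadditive C] [HasZeroObject C]
  [HasShift C ℤ] [∀ n : ℤ, (shiftFunctor C n).Additive] [Pretriangulated C]

theorem iter_comp_obj (F₁ F₂ : C ⥤ C) (G : C) (n : ℕ) :
    (iter C (F₂ ⋙ F₁) (n + 1)).obj G = F₁.obj ((iter C (F₁ ⋙ F₂) n).obj (F₂.obj G)) := by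
  induction n with
  | zero => rfl
  | succ n ih => exact congrArg (F₂ ⋙ F₁).obj ih

theorem SplitBuilt.map_iter {M : C} (F : C ⥤ C) [F.Additive] [F.CommShift ℤ] [F.IsTriangulated]
    {l : List ℤ} {A : C} (h : SplitBuilt M l A) (n : ℕ) :
    SplitBuilt ((iter C F n).obj M) l ((iter C F n).obj A) := by
  induction n with
  | zero => exact h
  | succ n ih => exact ih.map F

/-- The comparison `δ(G, (F₁F₂)ⁿ⁺¹G) ≤ K δ(G, (F₂F₁)ⁿG)`: the object on the left is
`F₁(F₂F₁)ⁿ(F₂G)`, and `K` accounts for building `F₁G` and `F₂G` from `G`. -/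
theorem entropy_comp_le [Linear ℂ C] (hft : IsFiniteType C)
    (G : C) (hG : IsSplitGenerator C G)
    (F₁ : C ⥤ C) [F₁.Additive] [F₁.CommShift ℤ] [F₁.IsTriangulated]
    (F₂ : C ⥤ C) [F₂.Additive] [F₂.CommShift ℤ] [F₂.IsTriangulated]
    (h₁₂ : ∀ n : ℕ, ¬ IsZero ((iter C (F₂ ⋙ F₁) n).obj G))
    (h₂₁ : ∀ n : ℕ, ¬ IsZero ((iter C (F₁ ⋙ F₂) n).obj G)) (t : ℝ) :
    entropy C (F₂ ⋙ F₁) G t ≤ entropy C (F₁ ⋙ F₂) G t := by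
  obtain ⟨s₁, hs₁⟩ := exists_splitBuilt hft hG (F₁.obj G)
  obtain ⟨s₂, hs₂⟩ := exists_splitBuilt hft hG (F₂.obj G)
  -- the maximum with `1` only serves to make the constant nonzero
  have hK : max (cost t s₁ * cost t s₂) 1 ≠ 0 := (zero_lt_one.trans_le (le_max_right _ _)).ne'
  have hK' : max (cost t s₁ * cost t s₂) 1 ≠ ⊤ :=
    (max_lt (ENNReal.mul_lt_top (cost_ne_top t s₁).lt_top (cost_ne_top t s₂).lt_top)
      ENNReal.one_lt_top).ne
  refine limsup_log_le hK hK' fun n => ?_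
  rw [complexity_eq hG t (h₁₂ _), complexity_eq hG t (h₂₁ n), ENNReal.mul_iInf_of_ne hK hK']
  refine le_iInf fun l => ?_
  rw [ENNReal.mul_iInf_of_ne hK hK']
  refine le_iInf fun hl => ?_
  have h1 := (hs₂.map_iter (F₁ ⋙ F₂) n).map F₁
  have h2 := (hs₁.trans hft (hl.map F₁)).trans hft h1
  rw [← iter_comp_obj] at h2
  refine (iInf₂_le (f := fun l (_ : SplitBuilt G l _) => cost t l) _ h2).trans ?_
  rw [cost_flatMap, cost_flatMap]
  calc cost t s₂ * (cost t l * cost t s₁) = (cost t s₁ * cost t s₂) * cost t l := by ring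
    _ ≤ _ := mul_le_mul_left (le_max_left _ _) _

end Entropy

/-- `h_t(F₁ F₂) = h_t(F₂ F₁)` (here `F₁ F₂ = F₂ ⋙ F₁`). -/
theorem statement_10 {C : Type u} [Category.{v} C] [Preadditive C] [HasZeroObject C]
    [HasShift C ℤ] [∀ n : ℤ, (shiftFunctor C n).Additive] [Pretriangulated C] [Linear ℂ C]
    (hC : ∃ X : C, ¬ IsZero X) (hft : IsFiniteType C)
    (G : C) (hG : IsSplitGenerator C G)
    (F₁ : C ⥤ C) [F₁.Additive] [F₁.Linear ℂ] [F₁.CommShift ℤ] [F₁.IsTriangulated]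
    (F₂ : C ⥤ C) [F₂.Additive] [F₂.Linear ℂ] [F₂.CommShift ℤ] [F₂.IsTriangulated]
    (h₁₂ : ∀ n : ℕ, ¬ IsZero ((iter C (F₂ ⋙ F₁) n).obj G))
    (h₂₁ : ∀ n : ℕ, ¬ IsZero ((iter C (F₁ ⋙ F₂) n).obj G))
    (t : ℝ) :
    entropy C (F₂ ⋙ F₁) G t = entropy C (F₁ ⋙ F₂) G t := by
  exact le_antisymm (entropy_comp_le hft G hG F₁ F₂ h₁₂ h₂₁ t)
    (entropy_comp_le hft G hG F₂ F₁ h₂₁ h₁₂ t)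

end CatEntropy
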